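/- arXiv:1005.1902 — 5 statements merged into one kernel-verified Lean document; each statement's English description precedes it below -/
import Mathlib

section
/- Let λ ≥ 2 and θ ∈ ℝ² ∖ {0}. Then there is at most one element g ∈ {h, v, h⁻¹, v⁻¹} such that ‖ρ_λ(g)θ‖ < ‖θ‖. Moreover, if g₁ ∈ {h, v, h⁻¹, v⁻¹} satisfies ‖ρ_λ(g₁)θ‖ < ‖θ‖ (respectively ‖ρ_λ(g₁)θ‖ ≤ ‖θ‖), then every g₂ ∈ {h, v, h⁻¹, v⁻¹} with g₂ ≠ g₁ satisfies ‖ρ_λ(g₂)θ‖ > ‖θ‖ (respectively ‖ρ_λ(g₂)θ‖ ≥ ‖θ‖). -/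
noncomputable section

abbrev F2 := FreeGroup Bool

def gh : F2 := FreeGroup.of true
def gv : F2 := FreeGroup.of false

def hmat (l : ℝ) : Matrix.SpecialLinearGroup (Fin 2) ℝ :=
  ⟨!![1, l; 0, 1], by norm_num [Matrix.det_fin_two_of]⟩

def vmat (l : ℝ) : Matrix.SpecialLinearGroup (Fin 2) ℝ :=
  ⟨!![1, 0; l, 1], by norm_num [Matrix.det_fin_two_of]⟩

def rho (l : ℝ) : F2 →* Matrix.SpecialLinearGroup (Fin 2) ℝ :=
  FreeGroup.lift fun b => if b then hmat l else vmat l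

def act (l : ℝ) (g : F2) (x : Fin 2 → ℝ) : Fin 2 → ℝ :=
  (rho l g).val.mulVec x

def nrm (x : Fin 2 → ℝ) : ℝ := Real.sqrt (x 0 ^ 2 + x 1 ^ 2)

def Circ : Set (Fin 2 → ℝ) := {x | nrm x = 1}

def gens : Set F2 := {gh, gv, gh⁻¹, gv⁻¹}

def ShrinkSet (l : ℝ) (g : F2) : Set (Fin 2 → ℝ) :=
  {x | x ∈ Circ ∧ nrm (act l g x) < 1}

def ExpSet (l : ℝ) (g : F2) : Set (Fin 2 → ℝ) :=
  {x | x ∈ Circ ∧ 1 < nrm (act l g x)}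

def IsGeodesicRay (g : ℕ → F2) : Prop :=
  g 0 = 1 ∧ (∀ n, g (n + 1) * (g n)⁻¹ ∈ gens) ∧ ∀ n, g (n + 2) * (g n)⁻¹ ≠ 1

def IsGeodesicSegment (g : ℕ → F2) (N : ℕ) : Prop :=
  g 0 = 1 ∧ (∀ n, n + 1 ≤ N → g (n + 1) * (g n)⁻¹ ∈ gens) ∧
    ∀ n, n + 2 ≤ N → g (n + 2) * (g n)⁻¹ ≠ 1

def IsShrinkingSeq (l : ℝ) (g : ℕ → F2) (θ : Fin 2 → ℝ) : Prop :=
  ∀ ε : ℝ, 0 < ε → ∃ i : ℕ, nrm (act l (g i) θ) < ε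

def Shrinkable (l : ℝ) (θ : Fin 2 → ℝ) : Prop :=
  ∀ ε : ℝ, 0 < ε → ∃ g : F2, nrm (act l g θ) < ε

def Renormalizable (l : ℝ) (θ : Fin 2 → ℝ) : Prop :=
  Shrinkable l θ ∧ ∀ k : F2, ∀ c : ℝ, act l (k * (gh * gv⁻¹) * k⁻¹) θ ≠ c • θ

abbrev SP := Bool × Bool

def Quad (s : SP) : Set (Fin 2 → ℝ) :=
  {x | (if s.1 then 0 < x 0 else x 0 < 0) ∧ (if s.2 then 0 < x 1 else x 1 < 0)}

def letterSigma : Bool × Bool → SP → SP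
  | (true, true), s => (s.2, s.2)
  | (false, true), s => (s.1, s.1)
  | (true, false), s => (!s.2, s.2)
  | (false, false), s => (s.1, !s.1)

def SigmaAct (g : F2) : SP → SP :=
  (FreeGroup.toWord g).foldr (fun w acc => letterSigma w ∘ acc) id

def gammaAut : F2 →* F2 := FreeGroup.lift fun b => if b then gv⁻¹ else gh⁻¹

def rPerm (s : SP) : SP := (!s.2, s.1)

def rPermInv (s : SP) : SP := (s.2, !s.1)

def shiftRay (g : ℕ → F2) : ℕ → F2 := fun n => g (n + 1) * (g 1)⁻¹

def TailEquiv (g g' : ℕ → F2) : Prop :=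
  ∃ m n : ℕ, shiftRay^[m] g = shiftRay^[n] g'

def seqPow (a : F2) : ℕ → F2 := fun n => a ^ n

def seqPer (a b : F2) : ℕ → F2 := fun n =>
  if n % 2 = 0 then (b * a) ^ (n / 2) else a * (b * a) ^ (n / 2)

def Cond1 (g : ℕ → F2) : Prop :=
  ¬ TailEquiv g (seqPow gh) ∧ ¬ TailEquiv g (seqPow gh⁻¹) ∧
    ¬ TailEquiv g (seqPow gv) ∧ ¬ TailEquiv g (seqPow gv⁻¹)

def Cond2 (g : ℕ → F2) : Prop :=
  ¬ TailEquiv g (seqPer gh gv⁻¹) ∧ ¬ TailEquiv g (seqPer gh⁻¹ gv)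

def adjSum {V : Type} (G : SimpleGraph V) (f : V → ℝ) (v : V) : ℝ :=
  ∑ᶠ w ∈ G.neighborSet v, f w

def BoundedValance {V : Type} (G : SimpleGraph V) : Prop :=
  ∃ D : ℕ, ∀ v, (G.neighborSet v).Finite ∧ (G.neighborSet v).ncard ≤ D

def BipartWith {V : Type} (G : SimpleGraph V) (A : Set V) : Prop :=
  ∀ v w, G.Adj v w → (v ∈ A ↔ w ∉ A)

def Hop {V : Type} (G : SimpleGraph V) (A : Set V) (k : ℤ) (f : V → ℝ) : V → ℝ :=
  fun v => f v + (k : ℝ) * Set.indicator A (adjSum G f) v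

def Vop {V : Type} (G : SimpleGraph V) (A : Set V) (k : ℤ) (f : V → ℝ) : V → ℝ :=
  fun v => f v + (k : ℝ) * Set.indicator Aᶜ (adjSum G f) v

def QuadV {V : Type} (A : Set V) (s : SP) : Set (V → ℝ) :=
  {f | (∀ v ∈ A, f v = 0 ∨ (if s.1 then 0 < f v else f v < 0)) ∧
       ∀ v, v ∉ A → f v = 0 ∨ (if s.2 then 0 < f v else f v < 0)}

def valance {V : Type} (G : SimpleGraph V) (v : V) : ℕ := (G.neighborSet v).ncard

def evec {V : Type} (v : V) : V → ℝ := Set.indicator {v} 1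

def InSpoke {V : Type} (G : SimpleGraph V) (x : V) : Prop :=
  ∃ k : ℕ, 2 ≤ k ∧ ∃ c : ℕ → V,
    (∀ i j, 1 ≤ i → i ≤ k → 1 ≤ j → j ≤ k → c i = c j → i = j) ∧
    valance G (c 1) = 1 ∧
    (∀ i, 2 ≤ i → i ≤ k - 1 →
      valance G (c i) = 2 ∧ G.Adj (c i) (c (i - 1)) ∧ G.Adj (c i) (c (i + 1))) ∧
    ∃ i, 1 ≤ i ∧ i ≤ k ∧ x = c i

def qf (x : Fin 2 → ℝ) : ℝ := x 0 ^ 2 + x 1 ^ 2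

lemma qf_nonneg (x : Fin 2 → ℝ) : 0 ≤ qf x := by unfold qf; positivity

lemma nrm_lt_iff (x y : Fin 2 → ℝ) : nrm x < nrm y ↔ qf x < qf y :=
  Real.sqrt_lt_sqrt_iff (qf_nonneg x)

lemma nrm_le_iff (x y : Fin 2 → ℝ) : nrm x ≤ nrm y ↔ qf x ≤ qf y :=
  Real.sqrt_le_sqrt_iff (qf_nonneg y)

lemma qf_h (l : ℝ) (x : Fin 2 → ℝ) :
    qf (act l gh x) = (x 0 + l * x 1) ^ 2 + x 1 ^ 2 := by
  simp [qf, act, rho, gh, hmat, Matrix.mulVec, dotProduct, Fin.sum_univ_two]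

lemma qf_v (l : ℝ) (x : Fin 2 → ℝ) :
    qf (act l gv x) = x 0 ^ 2 + (l * x 0 + x 1) ^ 2 := by
  simp [qf, act, rho, gv, vmat, Matrix.mulVec, dotProduct, Fin.sum_univ_two]

lemma hmat_inv (l : ℝ) : (hmat l)⁻¹ = hmat (-l) := by
  apply inv_eq_of_mul_eq_one_right
  apply Subtype.ext
  change !![1, l; 0, 1] * !![1, -l; 0, 1] = (1 : Matrix (Fin 2) (Fin 2) ℝ)
  simp [Matrix.mul_fin_two, Matrix.one_fin_two]

lemma vmat_inv (l : ℝ) : (vmat l)⁻¹ = vmat (-l) := by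
  apply inv_eq_of_mul_eq_one_right
  apply Subtype.ext
  change !![1, 0; l, 1] * !![1, 0; -l, 1] = (1 : Matrix (Fin 2) (Fin 2) ℝ)
  simp [Matrix.mul_fin_two, Matrix.one_fin_two]

lemma qf_h' (l : ℝ) (x : Fin 2 → ℝ) :
    qf (act l gh⁻¹ x) = (x 0 - l * x 1) ^ 2 + x 1 ^ 2 := by
  have e : rho l gh⁻¹ = rho (-l) gh := by simp [rho, gh, hmat_inv]
  have := qf_h (-l) x
  unfold act at this ⊢
  rw [e, this]; ring

lemma qf_v' (l : ℝ) (x : Fin 2 → ℝ) :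
    qf (act l gv⁻¹ x) = x 0 ^ 2 + (x 1 - l * x 0) ^ 2 := by
  have e : rho l gv⁻¹ = rho (-l) gv := by simp [rho, gv, vmat_inv]
  have := qf_v (-l) x
  unfold act at this ⊢
  rw [e, this]; ring

lemma key (l : ℝ) (hl : 2 ≤ l) (x : Fin 2 → ℝ) (g₁ g₂ : F2) (h1 : g₁ ∈ gens) (h2 : g₂ ∈ gens)
    (hne : g₂ ≠ g₁) : 2 * qf x ≤ qf (act l g₁ x) + qf (act l g₂ x) := by
  have hq : qf x = x 0 ^ 2 + x 1 ^ 2 := rfl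
  have A : 0 ≤ l * (l * (x 0 ^ 2 + x 1 ^ 2) + 4 * (x 0 * x 1)) :=
    mul_nonneg (by linarith) (by
      nlinarith [sq_nonneg (x 0 + x 1), mul_nonneg (sub_nonneg.2 hl) (qf_nonneg x)])
  have B : 0 ≤ l * (l * (x 0 ^ 2 + x 1 ^ 2) - 4 * (x 0 * x 1)) :=
    mul_nonneg (by linarith) (by
      nlinarith [sq_nonneg (x 0 - x 1), mul_nonneg (sub_nonneg.2 hl) (qf_nonneg x)])
  have C := sq_nonneg (l * x 0)
  have D := sq_nonneg (l * x 1)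
  simp only [gens, Set.mem_insert_iff, Set.mem_singleton_iff] at h1 h2
  rcases h1 with rfl | rfl | rfl | rfl <;> rcases h2 with rfl | rfl | rfl | rfl <;>
    first
    | exact absurd rfl hne
    | (simp only [qf_h, qf_v, qf_h', qf_v', hq]; nlinarith)

theorem stmt2 (l : ℝ) (hl : 2 ≤ l) (x : Fin 2 → ℝ) (hx : x ≠ 0) :
    (∀ g₁ ∈ gens, ∀ g₂ ∈ gens,
      nrm (act l g₁ x) < nrm x → nrm (act l g₂ x) < nrm x → g₁ = g₂) ∧
    (∀ g₁ ∈ gens, nrm (act l g₁ x) < nrm x →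
      ∀ g₂ ∈ gens, g₂ ≠ g₁ → nrm x < nrm (act l g₂ x)) ∧
    (∀ g₁ ∈ gens, nrm (act l g₁ x) ≤ nrm x →
      ∀ g₂ ∈ gens, g₂ ≠ g₁ → nrm x ≤ nrm (act l g₂ x)) := by
  simp only [nrm_lt_iff, nrm_le_iff]
  refine ⟨fun g₁ h1 g₂ h2 a b => ?_, fun g₁ h1 a g₂ h2 hne => ?_, fun g₁ h1 a g₂ h2 hne => ?_⟩
  · by_contra hne
    linarith [key l hl x g₁ g₂ h1 h2 (Ne.symm hne)]
  · linarith [key l hl x g₁ g₂ h1 h2 hne]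
  · linarith [key l hl x g₁ g₂ h1 h2 hne]
end
end

section
/- Let λ ≥ 2, let θ ∈ S¹, and let ⟨g_i⟩ be a geodesic ray or geodesic segment in F₂. If for some n ≥ 0 one has ‖ρ_λ(g_{n+1})θ‖ > ‖ρ_λ(g_n)θ‖ (respectively ‖ρ_λ(g_{n+1})θ‖ ≥ ‖ρ_λ(g_n)θ‖), then the sequence j ↦ ‖ρ_λ(g_{n+j})θ‖ (for j ≥ 0, as long as g_{n+j} is defined) is strictly increasing (respectively non-strictly increasing). -/
noncomputable section

lemma my_act_mul (l : ℝ) (a b : F2) (y : Fin 2 → ℝ) : act l (a * b) y = act l a (act l b y) := by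
  simp only [act, map_mul, Matrix.SpecialLinearGroup.coe_mul, Matrix.mulVec_mulVec]

lemma my_act_gh (l : ℝ) (y : Fin 2 → ℝ) : act l gh y = ![y 0 + l * y 1, y 1] := by
  ext i; fin_cases i <;> simp [act, rho, gh, hmat, Matrix.mulVec, dotProduct, Fin.sum_univ_two]

lemma my_act_gv (l : ℝ) (y : Fin 2 → ℝ) : act l gv y = ![y 0, l * y 0 + y 1] := by
  ext i; fin_cases i <;> simp [act, rho, gv, vmat, Matrix.mulVec, dotProduct, Fin.sum_univ_two]

lemma my_act_ghi (l : ℝ) (y : Fin 2 → ℝ) : act l gh⁻¹ y = ![y 0 - l * y 1, y 1] := by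
  have e : y = act l gh ![y 0 - l * y 1, y 1] := by
    rw [my_act_gh]; ext i; fin_cases i <;> simp
  conv_lhs => rw [e]
  rw [← my_act_mul, inv_mul_cancel]
  simp [act, -Matrix.cons_mulVec]

lemma my_act_gvi (l : ℝ) (y : Fin 2 → ℝ) : act l gv⁻¹ y = ![y 0, y 1 - l * y 0] := by
  have e : y = act l gv ![y 0, y 1 - l * y 0] := by
    rw [my_act_gv]; ext i; fin_cases i <;> simp
  conv_lhs => rw [e]
  rw [← my_act_mul, inv_mul_cancel]
  simp [act, -Matrix.cons_mulVec]

lemma my_nrm_lt (y z : Fin 2 → ℝ) :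
    nrm y < nrm z ↔ y 0 ^ 2 + y 1 ^ 2 < z 0 ^ 2 + z 1 ^ 2 :=
  Real.sqrt_lt_sqrt_iff (by positivity)

lemma my_nrm_le (y z : Fin 2 → ℝ) :
    nrm y ≤ nrm z ↔ y 0 ^ 2 + y 1 ^ 2 ≤ z 0 ^ 2 + z 1 ^ 2 :=
  Real.sqrt_le_sqrt_iff (by positivity)

lemma core_lt (l : ℝ) (hl : 2 ≤ l) (P q : ℝ) (h : (P - l * q) ^ 2 + q ^ 2 < P ^ 2 + q ^ 2) :
    P ^ 2 + q ^ 2 < (P + l * q) ^ 2 + q ^ 2 ∧ P ^ 2 + q ^ 2 < P ^ 2 + (l * P + q) ^ 2 ∧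
    P ^ 2 + q ^ 2 < P ^ 2 + (q - l * P) ^ 2 := by
  have hl0 : 0 < l := by linarith
  have h1 : l * (l * q ^ 2) < l * (2 * (P * q)) := by nlinarith
  have h2 := lt_of_mul_lt_mul_left h1 hl0.le
  have h3 : 0 ≤ (l - 2) * q ^ 2 := mul_nonneg (by linarith) (sq_nonneg q)
  have h4 : q ^ 2 < P * q := by nlinarith
  have h5 : 0 < P * q := by nlinarith [sq_nonneg q]
  have h6 : P * q < P ^ 2 := by nlinarith [sq_nonneg (P - q)]
  have h7 : 0 ≤ (l - 2) * P ^ 2 := mul_nonneg (by linarith) (sq_nonneg P)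
  have a1 : 0 < l * (2 * (P * q) + l * q ^ 2) := by positivity
  have a2 : 0 < l * (2 * (P * q) + l * P ^ 2) := by positivity
  have a3 : 0 < l * (l * P ^ 2 - 2 * (P * q)) := mul_pos hl0 (by nlinarith)
  refine ⟨?_, ?_, ?_⟩ <;> nlinarith

lemma core_le (l : ℝ) (hl : 2 ≤ l) (P q : ℝ) (h : (P - l * q) ^ 2 + q ^ 2 ≤ P ^ 2 + q ^ 2) :
    P ^ 2 + q ^ 2 ≤ (P + l * q) ^ 2 + q ^ 2 ∧ P ^ 2 + q ^ 2 ≤ P ^ 2 + (l * P + q) ^ 2 ∧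
    P ^ 2 + q ^ 2 ≤ P ^ 2 + (q - l * P) ^ 2 := by
  have hl0 : 0 < l := by linarith
  have h1 : l * (l * q ^ 2) ≤ l * (2 * (P * q)) := by nlinarith
  have h2 := le_of_mul_le_mul_left h1 hl0
  have h3 : 0 ≤ (l - 2) * q ^ 2 := mul_nonneg (by linarith) (sq_nonneg q)
  have h4 : q ^ 2 ≤ P * q := by nlinarith
  have h5 : 0 ≤ P * q := by nlinarith [sq_nonneg q]
  have h6 : P * q ≤ P ^ 2 := by nlinarith [sq_nonneg (P - q)]
  have h7 : 0 ≤ (l - 2) * P ^ 2 := mul_nonneg (by linarith) (sq_nonneg P)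
  have a1 : 0 ≤ l * (2 * (P * q) + l * q ^ 2) := by positivity
  have a2 : 0 ≤ l * (2 * (P * q) + l * P ^ 2) := by positivity
  have a3 : 0 ≤ l * (l * P ^ 2 - 2 * (P * q)) := mul_nonneg hl0.le (by nlinarith)
  refine ⟨?_, ?_, ?_⟩ <;> nlinarith

lemma step_lt (l : ℝ) (hl : 2 ≤ l) (s t : F2) (hs : s ∈ gens) (ht : t ∈ gens) (hst : t * s ≠ 1)
    (y : Fin 2 → ℝ) (h : nrm y < nrm (act l s y)) :
    nrm (act l s y) < nrm (act l t (act l s y)) := by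
  rw [my_nrm_lt] at h ⊢
  simp only [gens, Set.mem_insert_iff, Set.mem_singleton_iff] at hs ht
  rcases hs with rfl | rfl | rfl | rfl <;> rcases ht with rfl | rfl | rfl | rfl <;>
  first
  | exact absurd (mul_inv_cancel _) hst
  | exact absurd (inv_mul_cancel _) hst
  | (simp only [my_act_gh, my_act_gv, my_act_ghi, my_act_gvi, Matrix.cons_val_zero,
      Matrix.cons_val_one] at h ⊢
     first
     | (have := core_lt l hl (y 0 + l * y 1) (y 1) (by nlinarith)
        obtain ⟨h1, h2, h3⟩ := this
        first | linarith | nlinarith)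
     | (have := core_lt l hl (y 0 - l * y 1) (-(y 1)) (by nlinarith)
        obtain ⟨h1, h2, h3⟩ := this
        first | linarith | nlinarith)
     | (have := core_lt l hl (l * y 0 + y 1) (y 0) (by nlinarith)
        obtain ⟨h1, h2, h3⟩ := this
        first | linarith | nlinarith)
     | (have := core_lt l hl (y 1 - l * y 0) (-(y 0)) (by nlinarith)
        obtain ⟨h1, h2, h3⟩ := this
        first | linarith | nlinarith))

lemma seg_lt (l : ℝ) (hl : 2 ≤ l) (x : Fin 2 → ℝ) (g : ℕ → F2) (N : ℕ)
    (hg : IsGeodesicSegment g N) (n : ℕ)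
    (h : nrm (act l (g n) x) < nrm (act l (g (n + 1)) x)) (m : ℕ) (hm : n ≤ m) (hN : m + 1 ≤ N) :
    nrm (act l (g m) x) < nrm (act l (g (m + 1)) x) := by
  induction m, hm using Nat.le_induction with
  | base => exact h
  | succ m hm ih =>
    have ih := ih (by omega)
    have e1 : g (m + 1) = (g (m + 1) * (g m)⁻¹) * g m := by group
    have e2 : g (m + 1 + 1) = (g (m + 1 + 1) * (g (m + 1))⁻¹) * g (m + 1) := by group
    have k := step_lt l hl _ _ (hg.2.1 m (by omega)) (hg.2.1 (m + 1) (by omega))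
      (by have := hg.2.2 m (by omega); intro h'; apply this; rw [← h']; group) (act l (g m) x)
    rw [← my_act_mul, ← my_act_mul, ← e1, ← e2] at k
    exact k ih

lemma seg_lt' (l : ℝ) (hl : 2 ≤ l) (x : Fin 2 → ℝ) (g : ℕ → F2) (N : ℕ)
    (hg : IsGeodesicSegment g N) (n : ℕ)
    (h : nrm (act l (g n) x) < nrm (act l (g (n + 1)) x)) (a b : ℕ) (ha : n ≤ a) (hab : a < b)
    (hN : b ≤ N) :
    nrm (act l (g a) x) < nrm (act l (g b) x) := by
  induction b, hab using Nat.le_induction with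
  | base => exact seg_lt l hl x g N hg n h a ha hN
  | succ b hb ih =>
    exact (ih (by omega)).trans (seg_lt l hl x g N hg n h b (by omega) hN)

lemma step_le (l : ℝ) (hl : 2 ≤ l) (s t : F2) (hs : s ∈ gens) (ht : t ∈ gens) (hst : t * s ≠ 1)
    (y : Fin 2 → ℝ) (h : nrm y ≤ nrm (act l s y)) :
    nrm (act l s y) ≤ nrm (act l t (act l s y)) := by
  rw [my_nrm_le] at h ⊢
  simp only [gens, Set.mem_insert_iff, Set.mem_singleton_iff] at hs ht
  rcases hs with rfl | rfl | rfl | rfl <;> rcases ht with rfl | rfl | rfl | rfl <;>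
  first
  | exact absurd (mul_inv_cancel _) hst
  | exact absurd (inv_mul_cancel _) hst
  | (simp only [my_act_gh, my_act_gv, my_act_ghi, my_act_gvi, Matrix.cons_val_zero,
      Matrix.cons_val_one] at h ⊢
     first
     | (have := core_le l hl (y 0 + l * y 1) (y 1) (by nlinarith)
        obtain ⟨h1, h2, h3⟩ := this
        first | linarith | nlinarith)
     | (have := core_le l hl (y 0 - l * y 1) (-(y 1)) (by nlinarith)
        obtain ⟨h1, h2, h3⟩ := this
        first | linarith | nlinarith)
     | (have := core_le l hl (l * y 0 + y 1) (y 0) (by nlinarith)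
        obtain ⟨h1, h2, h3⟩ := this
        first | linarith | nlinarith)
     | (have := core_le l hl (y 1 - l * y 0) (-(y 0)) (by nlinarith)
        obtain ⟨h1, h2, h3⟩ := this
        first | linarith | nlinarith))

lemma seg_le (l : ℝ) (hl : 2 ≤ l) (x : Fin 2 → ℝ) (g : ℕ → F2) (N : ℕ)
    (hg : IsGeodesicSegment g N) (n : ℕ)
    (h : nrm (act l (g n) x) ≤ nrm (act l (g (n + 1)) x)) (m : ℕ) (hm : n ≤ m) (hN : m + 1 ≤ N) :
    nrm (act l (g m) x) ≤ nrm (act l (g (m + 1)) x) := by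
  induction m, hm using Nat.le_induction with
  | base => exact h
  | succ m hm ih =>
    have ih := ih (by omega)
    have e1 : g (m + 1) = (g (m + 1) * (g m)⁻¹) * g m := by group
    have e2 : g (m + 1 + 1) = (g (m + 1 + 1) * (g (m + 1))⁻¹) * g (m + 1) := by group
    have k := step_le l hl _ _ (hg.2.1 m (by omega)) (hg.2.1 (m + 1) (by omega))
      (by have := hg.2.2 m (by omega); intro h'; apply this; rw [← h']; group) (act l (g m) x)
    rw [← my_act_mul, ← my_act_mul, ← e1, ← e2] at k
    exact k ih

lemma seg_le' (l : ℝ) (hl : 2 ≤ l) (x : Fin 2 → ℝ) (g : ℕ → F2) (N : ℕ)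
    (hg : IsGeodesicSegment g N) (n : ℕ)
    (h : nrm (act l (g n) x) ≤ nrm (act l (g (n + 1)) x)) (a b : ℕ) (ha : n ≤ a) (hab : a ≤ b)
    (hN : b ≤ N) :
    nrm (act l (g a) x) ≤ nrm (act l (g b) x) := by
  induction b, hab using Nat.le_induction with
  | base => exact le_rfl
  | succ b hb ih =>
    exact (ih (by omega)).trans (seg_le l hl x g N hg n h b (by omega) hN)

theorem stmt3 (l : ℝ) (hl : 2 ≤ l) (x : Fin 2 → ℝ) (hx : x ∈ Circ) :
    (∀ g : ℕ → F2, IsGeodesicRay g → ∀ n : ℕ,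
      (nrm (act l (g n) x) < nrm (act l (g (n + 1)) x) →
        StrictMonoOn (fun j => nrm (act l (g j) x)) (Set.Ici n)) ∧
      (nrm (act l (g n) x) ≤ nrm (act l (g (n + 1)) x) →
        MonotoneOn (fun j => nrm (act l (g j) x)) (Set.Ici n))) ∧
    (∀ g : ℕ → F2, ∀ N : ℕ, IsGeodesicSegment g N → ∀ n : ℕ, n + 1 ≤ N →
      (nrm (act l (g n) x) < nrm (act l (g (n + 1)) x) →
        StrictMonoOn (fun j => nrm (act l (g j) x)) (Set.Icc n N)) ∧
      (nrm (act l (g n) x) ≤ nrm (act l (g (n + 1)) x) →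
        MonotoneOn (fun j => nrm (act l (g j) x)) (Set.Icc n N))) := by
  refine ⟨fun g hg n => ?_, fun g N hg n _ => ⟨fun h => ?_, fun h => ?_⟩⟩
  · have hs : ∀ N, IsGeodesicSegment g N := fun N =>
      ⟨hg.1, fun n _ => hg.2.1 n, fun n _ => hg.2.2 n⟩
    exact ⟨fun h a ha b _ hab => seg_lt' l hl x g b (hs b) n h a b ha hab le_rfl,
      fun h a ha b _ hab => seg_le' l hl x g b (hs b) n h a b ha hab le_rfl⟩
  · exact fun a ha b hb hab => seg_lt' l hl x g N hg n h a b ha.1 hab hb.2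
  · exact fun a ha b hb hab => seg_le' l hl x g N hg n h a b ha.1 hab hb.2
end
end

section
/- Let λ ≥ 2 and let θ ∈ S¹ satisfy θ ∉ Shrink_λ(h) ∪ Shrink_λ(h⁻¹) ∪ Shrink_λ(v) ∪ Shrink_λ(v⁻¹). Then for every g ∈ F₂ one has ‖θ‖ ≤ ‖ρ_λ(g)θ‖. -/
noncomputable section

def sgn4 (e : Bool) : ℝ := if e then 1 else -1

def stp (l : ℝ) (t : Bool × Bool) (y : Fin 2 → ℝ) : Fin 2 → ℝ :=
  if t.1 then ![y 0 + sgn4 t.2 * l * y 1, y 1] else ![y 0, y 1 + sgn4 t.2 * l * y 0]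

def CC (l : ℝ) (t : Bool × Bool) (y : Fin 2 → ℝ) : Prop :=
  if t.1 then 0 ≤ sgn4 t.2 * (2 * y 0 * y 1) + l * y 1 ^ 2
  else 0 ≤ sgn4 t.2 * (2 * y 0 * y 1) + l * y 0 ^ 2

lemma act_mk_single (l : ℝ) (t : Bool × Bool) (y : Fin 2 → ℝ) :
    act l (FreeGroup.mk [t]) y = stp l t y := by
  obtain ⟨b, e⟩ := t
  have k1 : (rho l (FreeGroup.mk [(true, false)])).val = !![1, -l; 0, 1] := by
    have : rho l (FreeGroup.mk [(true, false)]) = (hmat l)⁻¹ := by simp [rho]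
    exact (congrArg Subtype.val this).trans ((Matrix.SpecialLinearGroup.coe_inv _).trans
      (by simp [hmat, Matrix.adjugate_fin_two_of]))
  have k2 : (rho l (FreeGroup.mk [(false, false)])).val = !![1, 0; -l, 1] := by
    have : rho l (FreeGroup.mk [(false, false)]) = (vmat l)⁻¹ := by simp [rho]
    exact (congrArg Subtype.val this).trans ((Matrix.SpecialLinearGroup.coe_inv _).trans
      (by simp [vmat, Matrix.adjugate_fin_two_of]))
  have k3 : (rho l (FreeGroup.mk [(true, true)])).val = !![1, l; 0, 1] := by
    have : rho l (FreeGroup.mk [(true, true)]) = hmat l := by simp [rho]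
    rw [this]; rfl
  have k4 : (rho l (FreeGroup.mk [(false, true)])).val = !![1, 0; l, 1] := by
    have : rho l (FreeGroup.mk [(false, true)]) = vmat l := by simp [rho]
    rw [this]; rfl
  cases b <;> cases e <;> ext i <;> simp only [act, k1, k2, k3, k4] <;> fin_cases i <;>
    simp [stp, sgn4, Matrix.mulVec, dotProduct, Fin.sum_univ_two]
  all_goals ring

lemma act_mul (l : ℝ) (g k : F2) (y : Fin 2 → ℝ) : act l (g * k) y = act l g (act l k y) := by
  simp only [act, map_mul, Matrix.mulVec_mulVec]; rfl

lemma act_cons (l : ℝ) (t : Bool × Bool) (L : List (Bool × Bool)) (y : Fin 2 → ℝ) :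
    act l (FreeGroup.mk (t :: L)) y = stp l t (act l (FreeGroup.mk L) y) := by
  rw [← act_mk_single, ← act_mul, FreeGroup.mul_mk]; rfl

lemma nrm_iff (l : ℝ) (hl : 2 ≤ l) (t : Bool × Bool) (y : Fin 2 → ℝ) :
    nrm y ≤ nrm (stp l t y) ↔ CC l t y := by
  have key : ∀ z : ℝ, 0 ≤ l * z ↔ 0 ≤ z := fun z => mul_nonneg_iff_of_pos_left (by linarith)
  unfold nrm
  rw [Real.sqrt_le_sqrt_iff (by positivity), ← sub_nonneg]
  obtain ⟨b, e⟩ := t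
  cases b <;> cases e
  all_goals
    simp only [CC, if_true, if_false, Bool.false_eq_true]
    rw [← key (_ + _)]
    apply iff_of_eq
    congr 1
    simp [stp, sgn4]
    ring

lemma aux1 (l a b : ℝ) (hl : 2 ≤ l) (h : 0 ≤ 2 * a * b + l * b ^ 2) :
    0 ≤ 2 * (a + l * b) * b + l * b ^ 2 ∧
    0 ≤ 2 * (a + l * b) * b + l * (a + l * b) ^ 2 ∧
    0 ≤ - (2 * (a + l * b) * b) + l * (a + l * b) ^ 2 := by
  obtain ⟨c, rfl⟩ : ∃ c, a = c - l * b := ⟨a + l * b, by ring⟩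
  have e : c - l * b + l * b = c := by ring
  rw [e]
  have h1 : l * b ^ 2 ≤ 2 * c * b := by nlinarith
  have h0 : 0 ≤ l * b ^ 2 := by positivity
  have hc : 0 ≤ l * c ^ 2 := by positivity
  refine ⟨by linarith, by linarith, ?_⟩
  have h2 : 2 * b ^ 2 ≤ l * b ^ 2 := by nlinarith [sq_nonneg b]
  have h3 : 2 * c ^ 2 ≤ l * c ^ 2 := by nlinarith [sq_nonneg c]
  nlinarith [sq_nonneg (b - c)]

lemma CC_step (l : ℝ) (hl : 2 ≤ l) (s t : Bool × Bool) (y : Fin 2 → ℝ) (h : CC l s y)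
    (hst : t.1 = s.1 → t.2 = s.2) : CC l t (stp l s y) := by
  have a1 := aux1 l (y 0) (y 1) hl
  have a2 := aux1 l (-y 0) (y 1) hl
  have a3 := aux1 l (y 1) (y 0) hl
  have a4 := aux1 l (-y 1) (y 0) hl
  obtain ⟨b, e⟩ := s
  obtain ⟨b', e'⟩ := t
  cases b <;> cases e <;> cases b' <;> cases e' <;> simp [CC, stp, sgn4] at h hst ⊢
  all_goals first
    | (obtain ⟨p, q, r⟩ := a1 (by linarith); first | nlinarith only [p] | nlinarith only [q] | nlinarith only [r])
    | (obtain ⟨p, q, r⟩ := a2 (by linarith); first | nlinarith only [p] | nlinarith only [q] | nlinarith only [r])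
    | (obtain ⟨p, q, r⟩ := a3 (by linarith); first | nlinarith only [p] | nlinarith only [q] | nlinarith only [r])
    | (obtain ⟨p, q, r⟩ := a4 (by linarith); first | nlinarith only [p] | nlinarith only [q] | nlinarith only [r])

lemma main4 (l : ℝ) (hl : 2 ≤ l) (x : Fin 2 → ℝ) (h : ∀ t, CC l t x)
    (L : List (Bool × Bool)) (hL : FreeGroup.IsReduced L) :
    nrm x ≤ nrm (act l (FreeGroup.mk L) x) ∧
      ∀ t, FreeGroup.IsReduced (t :: L) → CC l t (act l (FreeGroup.mk L) x) := by
  induction L with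
  | nil =>
    have : act l (FreeGroup.mk []) x = x := by
      rw [← FreeGroup.one_eq_mk]; simp [act]
    rw [this]
    exact ⟨le_rfl, fun t _ => h t⟩
  | cons s L ih =>
    have hL' : FreeGroup.IsReduced L := List.IsChain.tail hL
    obtain ⟨i1, i2⟩ := ih hL'
    rw [act_cons]
    refine ⟨i1.trans ((nrm_iff l hl _ _).2 (i2 s hL)), fun t ht => ?_⟩
    exact CC_step l hl s t _ (i2 s hL) (List.isChain_cons_cons.1 ht).1

theorem stmt4 (l : ℝ) (hl : 2 ≤ l) (x : Fin 2 → ℝ) (hx : x ∈ Circ)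
    (h : x ∉ ShrinkSet l gh ∪ ShrinkSet l gh⁻¹ ∪ ShrinkSet l gv ∪ ShrinkSet l gv⁻¹) :
    ∀ g : F2, nrm x ≤ nrm (act l g x) := by
  have hn : nrm x = 1 := hx
  simp only [Set.mem_union, not_or, ShrinkSet, Set.mem_ofPred_eq, not_and, not_lt] at h
  obtain ⟨⟨⟨h1, h2⟩, h3⟩, h4⟩ := h
  have hc : ∀ t, CC l t x := by
    intro t
    rw [← nrm_iff l hl, ← act_mk_single, hn]
    obtain ⟨b, e⟩ := t
    cases b <;> cases e
    · exact h4 hx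
    · exact h3 hx
    · exact h2 hx
    · exact h1 hx
  intro g
  have := (main4 l hl x hc g.toWord FreeGroup.isReduced_toWord).1
  rwa [FreeGroup.mk_toWord] at this
end
end

section
/- Consider the following conditions on a geodesic ray ⟨g_i⟩ in F₂. Condition (1): ⟨g_i⟩ is not tail equivalent to any of the four geodesic rays ⟨e, h, h², …⟩, ⟨e, h⁻¹, h⁻², …⟩, ⟨e, v, v², …⟩, ⟨e, v⁻¹, v⁻², …⟩. Condition (2): ⟨g_i⟩ is not tail equivalent to either of the sequences ⟨e, h, v⁻¹h, hv⁻¹h, v⁻¹hv⁻¹h, …⟩ and ⟨e, h⁻¹, vh⁻¹, h⁻¹vh⁻¹, vh⁻¹vh⁻¹, …⟩. Then: for λ > 2, a geodesic ray is a λ-shrinking sequence of some θ ∈ S¹ if and only if it satisfies condition (1); for λ = 2, a geodesic ray is a 2-shrinking sequence of some θ ∈ S¹ if and only if it satisfies conditions (1) and (2). -/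
noncomputable section

namespace S7

def Lt : Bool × Bool → F2
  | (true, true) => gh
  | (true, false) => gh⁻¹
  | (false, true) => gv
  | (false, false) => gv⁻¹

def iv (c : Bool × Bool) : Bool × Bool := (c.1, !c.2)

def sg (l : ℝ) (s : Bool) : ℝ := if s then l else -l

def Am (l : ℝ) (c : Bool × Bool) (x : Fin 2 → ℝ) : Fin 2 → ℝ :=
  if c.1 then ![x 0 + sg l c.2 * x 1, x 1] else ![x 0, x 1 + sg l c.2 * x 0]

def DD (c : Bool × Bool) (x : Fin 2 → ℝ) : Prop :=
  (if c.1 then x 1 ^ 2 ≤ x 0 ^ 2 else x 0 ^ 2 ≤ x 1 ^ 2) ∧ sg 1 c.2 * (x 0 * x 1) ≤ 0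

def NN (x : Fin 2 → ℝ) : ℝ := x 0 ^ 2 + x 1 ^ 2

lemma Lt_iv (c) : Lt (iv c) = (Lt c)⁻¹ := by
  rcases c with ⟨_ | _, _ | _⟩ <;> simp [Lt, iv]

lemma act_mul (l : ℝ) (a b : F2) (x) : act l (a * b) x = act l a (act l b x) := by
  unfold act
  rw [Matrix.mulVec_mulVec, map_mul]; rfl

lemma act_one (l : ℝ) (x) : act l 1 x = x := by
  simp [act]

lemma rho_gh (l : ℝ) : rho l gh = hmat l := by simp [rho, gh]
lemma rho_gv (l : ℝ) : rho l gv = vmat l := by simp [rho, gv]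

lemma act_Lt_pos (l : ℝ) (t : Bool) (x) : act l (Lt (t, true)) x = Am l (t, true) x := by
  cases t <;> ext i <;> fin_cases i <;>
    simp [act, Lt, Am, sg, rho_gh, rho_gv, hmat, vmat, Matrix.mulVec, dotProduct, Fin.sum_univ_two] <;> ring

lemma act_Lt (l : ℝ) (c) (x) : act l (Lt c) x = Am l c x := by
  rcases c with ⟨t, s⟩
  cases s
  · have h : x = act l (Lt (t, true)) (Am l (t, false) x) := by
      rw [act_Lt_pos]
      cases t <;> ext i <;> fin_cases i <;> simp [Am, sg]
    conv_lhs => rw [h]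
    rw [← act_mul]
    have : Lt (t, false) * Lt (t, true) = 1 := by cases t <;> simp [Lt]
    rw [this, act_one]
  · exact act_Lt_pos l t x

lemma act_smul (l : ℝ) (a : F2) (r : ℝ) (x) : act l a (r • x) = r • act l a x := by
  simp [act, Matrix.mulVec_smul]

lemma act_ne (l : ℝ) (a : F2) (x) (hx : x ≠ 0) : act l a x ≠ 0 := by
  intro h
  apply hx
  have : act l a⁻¹ (act l a x) = x := by rw [← act_mul]; simp [act_one]
  rw [← this, h]; simp [act]

lemma nrm_sq (x) : nrm x ^ 2 = NN x := by
  unfold nrm NN; rw [Real.sq_sqrt]; positivity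

lemma nrm_nonneg (x) : 0 ≤ nrm x := Real.sqrt_nonneg _

lemma NN_pos {x} (hx : x ≠ 0) : 0 < NN x := by
  unfold NN
  by_contra h
  apply hx
  have h0 : x 0 = 0 := by nlinarith [sq_nonneg (x 0), sq_nonneg (x 1)]
  have h1 : x 1 = 0 := by nlinarith [sq_nonneg (x 0), sq_nonneg (x 1)]
  ext i; fin_cases i <;> simp [h0, h1]

lemma nrm_pos {x} (hx : x ≠ 0) : 0 < nrm x := Real.sqrt_pos.2 (NN_pos hx)

lemma abs0 (x) : |x 0| ≤ nrm x := Real.abs_le_sqrt (by nlinarith [sq_nonneg (x 1)])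
lemma abs1 (x) : |x 1| ≤ nrm x := Real.abs_le_sqrt (by nlinarith [sq_nonneg (x 0)])

lemma circ_ne {x} (hx : x ∈ Circ) : x ≠ 0 := by
  rintro rfl
  simp [Circ, nrm] at hx

lemma pingpong (l : ℝ) (hl : 2 ≤ l) (a a' : Bool × Bool) (h : a' ≠ iv a) (y) (hy : DD a' y) :
    DD a (Am l (iv a) y) := by
  have h2 : 0 ≤ l - 2 := by linarith
  have e0 : 0 ≤ (l - 2) * y 0 ^ 2 := by positivity
  have e1 : 0 ≤ (l - 2) * y 1 ^ 2 := by positivity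
  have f0 : 0 ≤ l * (l - 2) * y 0 ^ 2 := by positivity
  have f1 : 0 ≤ l * (l - 2) * y 1 ^ 2 := by positivity
  have q0 := mul_nonneg (sq_nonneg (l - 2)) (sq_nonneg (y 0))
  have q1 := mul_nonneg (sq_nonneg (l - 2)) (sq_nonneg (y 1))
  have s1 := sq_nonneg (y 0 + y 1)
  have s2 := sq_nonneg (y 0 - y 1)
  have s3 := mul_nonneg h2 s1
  have s4 := mul_nonneg h2 s2
  have hl0 : 0 ≤ l := by linarith
  rcases a with ⟨_ | _, _ | _⟩ <;> rcases a' with ⟨_ | _, _ | _⟩ <;>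
    simp [DD, Am, sg, iv] at h hy ⊢ <;> obtain ⟨u, w⟩ := hy <;>
    have w' := mul_nonneg h2 (sub_nonneg.2 u) <;>
    have w'' := mul_le_mul_of_nonneg_left w hl0 <;>
    constructor <;> nlinarith

lemma mono (l : ℝ) (hl : 2 ≤ l) (a a' : Bool × Bool) (h : a' ≠ iv a) (y) (hy : DD a' y) :
    NN y ≤ NN (Am l (iv a) y) := by
  have h2 : 0 ≤ l - 2 := by linarith
  have hl0 : 0 ≤ l := by linarith
  have f0 : 0 ≤ l * (l - 2) * y 0 ^ 2 := by positivity
  have f1 : 0 ≤ l * (l - 2) * y 1 ^ 2 := by positivity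
  have s1 := mul_nonneg hl0 (sq_nonneg (y 0 + y 1))
  have s2 := mul_nonneg hl0 (sq_nonneg (y 0 - y 1))
  rcases a with ⟨_ | _, _ | _⟩ <;> rcases a' with ⟨_ | _, _ | _⟩ <;>
    simp [DD, Am, sg, iv, NN] at * <;> obtain ⟨u, w⟩ := hy <;>
    have w' := mul_nonneg hl0 (sub_nonneg.2 u) <;>
    have w'' := mul_le_mul_of_nonneg_left w hl0 <;> nlinarith

lemma switch (l : ℝ) (hl : 2 ≤ l) (a a' : Bool × Bool) (h : a'.1 ≠ a.1) (y) (hy : DD a' y) :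
    (1 + l * (l - 2) / 2) * NN y ≤ NN (Am l (iv a) y) := by
  have h2 : 0 ≤ l - 2 := by linarith
  have hl0 : 0 ≤ l := by linarith
  have hl2 : 0 ≤ l * (l - 2) := by positivity
  have s1 := mul_nonneg hl0 (sq_nonneg (y 0 + y 1))
  have s2 := mul_nonneg hl0 (sq_nonneg (y 0 - y 1))
  rcases a with ⟨_ | _, _ | _⟩ <;> rcases a' with ⟨_ | _, _ | _⟩ <;>
    simp [DD, Am, sg, iv, NN] at * <;> obtain ⟨u, w⟩ := hy <;>
    have w' := mul_nonneg hl0 (sub_nonneg.2 u) <;>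
    have w3 := mul_nonneg hl2 (sub_nonneg.2 u) <;>
    have w'' := mul_le_mul_of_nonneg_left w hl0 <;> nlinarith

lemma good (a a' : Bool × Bool) (h : a'.1 ≠ a.1) (h' : a'.2 = a.2) (y) (hy : DD a' y) :
    3 * NN y ≤ NN (Am 2 (iv a) y) := by
  rcases a with ⟨_ | _, _ | _⟩ <;> rcases a' with ⟨_ | _, _ | _⟩ <;>
    simp [DD, Am, sg, iv, NN] at * <;> obtain ⟨u, w⟩ := hy <;> nlinarith

lemma samesw (a a' : Bool × Bool) (h : a'.1 ≠ a.1) (y) (hy : DD a' y) :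
    3 * NN y ≤ NN (Am 2 (iv a) (Am 2 (iv a) y)) := by
  have s1 := sq_nonneg (y 0 + y 1)
  have s2 := sq_nonneg (y 0 - y 1)
  rcases a with ⟨_ | _, _ | _⟩ <;> rcases a' with ⟨_ | _, _ | _⟩ <;>
    simp [DD, Am, sg, iv, NN] at * <;> obtain ⟨u, w⟩ := hy <;> nlinarith

lemma gens_Lt {x : F2} (hx : x ∈ gens) : ∃ c, x = Lt c := by
  simp only [gens, Set.mem_insert_iff, Set.mem_singleton_iff] at hx
  rcases hx with h | h | h | h
  · exact ⟨(true, true), h⟩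
  · exact ⟨(false, true), h⟩
  · exact ⟨(true, false), h⟩
  · exact ⟨(false, false), h⟩

lemma letters {g : ℕ → F2} (hg : IsGeodesicRay g) : ∃ a : ℕ → Bool × Bool,
    (∀ n, g (n + 1) = Lt (a n) * g n) ∧ ∀ n, a (n + 1) ≠ iv (a n) := by
  obtain ⟨h0, h1, h2⟩ := hg
  choose a ha using fun n => gens_Lt (h1 n)
  have hs : ∀ n, g (n + 1) = Lt (a n) * g n := fun n => by rw [← ha n]; group
  refine ⟨a, hs, fun n hn => h2 n ?_⟩
  rw [show n + 2 = (n + 1) + 1 from rfl, hs, hs, hn, Lt_iv]; group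

lemma iv_iv (c) : iv (iv c) = c := by simp [iv]

lemma act_back (l : ℝ) {g : ℕ → F2} {a : ℕ → Bool × Bool} (hs : ∀ n, g (n + 1) = Lt (a n) * g n)
    (n : ℕ) (x) : act l (g n) x = Am l (iv (a n)) (act l (g (n + 1)) x) := by
  rw [← act_Lt, Lt_iv, ← act_mul, hs]; congr 1; group

lemma DD_smul (c) (r : ℝ) (x) (h : DD c x) : DD c (r • x) := by
  obtain ⟨u, w⟩ := h
  have := mul_nonneg (sq_nonneg r) (neg_nonneg.2 w)
  rcases c with ⟨_ | _, _ | _⟩ <;> simp [DD, sg, mul_pow] at * <;>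
    exact ⟨by gcongr, by nlinarith⟩

lemma exists_DD (c) : ∃ x, x ≠ 0 ∧ DD c x := by
  rcases c with ⟨_ | _, _ | _⟩
  · exact ⟨![1, 1], by simp, by simp [DD, sg]⟩
  · exact ⟨![1, -1], by simp, by simp [DD, sg]⟩
  · exact ⟨![1, 1], by simp, by simp [DD, sg]⟩
  · exact ⟨![1, -1], by simp, by simp [DD, sg]⟩

lemma circ_compact : IsCompact Circ := by
  apply Metric.isCompact_of_isClosed_isBounded
  · apply isClosed_eq _ continuous_const
    unfold nrm; fun_prop
  · apply (Metric.isBounded_closedBall (x := (0 : Fin 2 → ℝ)) (r := 1)).subset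
    intro x hx
    have hx : nrm x = 1 := hx
    rw [mem_closedBall_zero_iff, pi_norm_le_iff_of_nonneg zero_le_one]
    intro i
    fin_cases i
    · exact (abs0 x).trans hx.le
    · exact (abs1 x).trans hx.le

lemma act_cont (l a) : Continuous (act l a) := by
  unfold act; fun_prop

lemma DD_closed (l a c) : IsClosed {x | DD c (act l a x)} := by
  have := act_cont l a
  have h0 : Continuous fun x => act l a x 0 := by fun_prop
  have h1 : Continuous fun x => act l a x 1 := by fun_prop
  unfold DD
  refine IsClosed.inter ?_ (isClosed_le (continuous_const.mul (h0.mul h1)) continuous_const)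
  rcases c with ⟨_ | _, _ | _⟩ <;> simp only [if_true, Bool.false_eq_true, if_false] <;>
    first | exact isClosed_le (h0.pow 2) (h1.pow 2) | exact isClosed_le (h1.pow 2) (h0.pow 2)

lemma exists_dir (l : ℝ) (hl : 2 ≤ l) {g : ℕ → F2} {a : ℕ → Bool × Bool}
    (hs : ∀ n, g (n + 1) = Lt (a n) * g n) (hb : ∀ n, a (n + 1) ≠ iv (a n)) :
    ∃ x ∈ Circ, ∀ n, DD (a n) (act l (g n) x) := by
  let K : ℕ → Set (Fin 2 → ℝ) := fun N => {x | x ∈ Circ ∧ ∀ n ≤ N, DD (a n) (act l (g n) x)}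
  have hcl : ∀ N, IsClosed (K N) := by
    intro N
    refine IsClosed.inter circ_compact.isClosed ?_
    have : {x | ∀ n ≤ N, DD (a n) (act l (g n) x)} = ⋂ n, ⋂ (_ : n ≤ N), {x | DD (a n) (act l (g n) x)} := by
      ext; simp
    change IsClosed {x | ∀ n ≤ N, DD (a n) (act l (g n) x)}
    rw [this]
    exact isClosed_iInter fun n => isClosed_iInter fun _ => DD_closed _ _ _
  have hne : ∀ N, (K N).Nonempty := by
    intro N
    obtain ⟨y, hy0, hy⟩ := exists_DD (a N)
    set z := act l (g N)⁻¹ y with hz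
    have hz0 : z ≠ 0 := act_ne _ _ _ hy0
    have hzN : act l (g N) z = y := by rw [hz, ← act_mul]; simp [act_one]
    have key : ∀ k ≤ N, DD (a (N - k)) (act l (g (N - k)) z) := by
      intro k
      induction k with
      | zero => intro _; simpa [hzN] using hy
      | succ k ih =>
        intro hk
        have := ih (by omega)
        have e : N - k = N - (k + 1) + 1 := by omega
        rw [e] at this
        rw [act_back l hs]
        exact pingpong l hl _ _ (hb _) _ this
    refine ⟨(nrm z)⁻¹ • z, ?_, ?_⟩
    · have hp := nrm_pos hz0
      have h2 := nrm_sq z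
      have : nrm ((nrm z)⁻¹ • z) ^ 2 = 1 := by
        rw [nrm_sq]
        simp only [NN, Pi.smul_apply, smul_eq_mul] at *
        field_simp; linarith
      have := nrm_nonneg ((nrm z)⁻¹ • z)
      change nrm _ = 1
      nlinarith
    · intro n hn
      rw [act_smul]
      apply DD_smul
      have := key (N - n) (by omega)
      rwa [show N - (N - n) = n by omega] at this
  obtain ⟨x, hx⟩ := IsCompact.nonempty_iInter_of_sequence_nonempty_isCompact_isClosed K
    (fun N x hx => ⟨hx.1, fun n hn => hx.2 n (by omega)⟩) hne
    (circ_compact.of_isClosed_subset (hcl 0) fun x hx => hx.1) hcl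
  rw [Set.mem_iInter] at hx
  exact ⟨x, (hx 0).1, fun n => (hx n).2 n le_rfl⟩

lemma shrink_seq (f : ℕ → ℝ) (hf : Antitone f) (h0 : ∀ n, 0 ≤ f n) (K : ℝ) (hK : 1 < K)
    (h : ∀ m, ∃ n, m ≤ n ∧ K * f (n + 2) ≤ f n) (ε : ℝ) (hε : 0 < ε) : ∃ i, f i < ε := by
  by_contra! hc
  have hbd : BddBelow (Set.range f) := ⟨0, by rintro _ ⟨n, rfl⟩; exact h0 n⟩
  have ht := tendsto_atTop_ciInf hf hbd
  set L := ⨅ i, f i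
  have hL : ε ≤ L := le_ciInf hc
  have hLp : 0 < L := by linarith
  have hlt : L < K * L := by nlinarith
  obtain ⟨m, hm⟩ := (ht.eventually (gt_mem_nhds hlt)).exists
  obtain ⟨n, hmn, hn⟩ := h m
  have h1 : f n ≤ f m := hf hmn
  have h2 : L ≤ f (n + 2) := ciInf_le hbd _
  nlinarith

lemma shrinks (l : ℝ) (hl : 2 ≤ l) {g : ℕ → F2} {a : ℕ → Bool × Bool}
    (hs : ∀ n, g (n + 1) = Lt (a n) * g n) (hb : ∀ n, a (n + 1) ≠ iv (a n)) (K : ℝ) (hK : 1 < K)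
    (h : ∀ x, (∀ n, DD (a n) (act l (g n) x)) → 
      ∀ m, ∃ n, m ≤ n ∧ K * NN (act l (g (n + 2)) x) ≤ NN (act l (g n) x)) :
    ∃ x ∈ Circ, IsShrinkingSeq l g x := by
  obtain ⟨x, hx, hD⟩ := exists_dir l hl hs hb
  refine ⟨x, hx, fun ε hε => ?_⟩
  obtain ⟨i, hi⟩ := shrink_seq (fun n => NN (act l (g n) x)) (antitone_nat_of_succ_le fun n => by
      rw [act_back l hs n]; exact mono l hl _ _ (hb _) _ (hD (n + 1)))
    (fun n => by unfold NN; positivity) K hK (h x hD) (ε ^ 2) (by positivity)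
  refine ⟨i, ?_⟩
  simp only [← nrm_sq] at hi
  exact lt_of_pow_lt_pow_left₀ 2 hε.le hi

lemma shift_iter {g : ℕ → F2} (h0 : g 0 = 1) (m k : ℕ) :
    shiftRay^[m] g k = g (m + k) * (g m)⁻¹ := by
  induction m generalizing k with
  | zero => simp [h0]
  | succ m ih =>
    rw [Function.iterate_succ_apply']
    simp only [shiftRay, ih]
    rw [show m + (k + 1) = m + 1 + k by ring]; group

lemma seqPer_succ (a b : F2) (n : ℕ) :
    seqPer a b (n + 1) = (if n % 2 = 0 then a else b) * seqPer a b n := by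
  rcases Nat.even_or_odd' n with ⟨k, rfl | rfl⟩
  · have e1 : (2 * k + 1) / 2 = k := by omega
    have e2 : (2 * k + 1) % 2 = 1 := by omega
    simp [seqPer, e1, e2]
  · have e1 : (2 * k + 1) / 2 = k := by omega
    have e2 : (2 * k + 1) % 2 = 1 := by omega
    have e3 : (2 * k + 1 + 1) / 2 = k + 1 := by omega
    have e4 : (2 * k + 1 + 1) % 2 = 0 := by omega
    simp [seqPer, e1, e2, e3, e4, pow_succ', mul_assoc]

lemma seqPow_zero (a : F2) : seqPow a 0 = 1 := by simp [seqPow]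
lemma seqPer_zero (a b : F2) : seqPer a b 0 = 1 := by simp [seqPer]

lemma tail_pow {g : ℕ → F2} {a : ℕ → Bool × Bool} (h0 : g 0 = 1)
    (hs : ∀ n, g (n + 1) = Lt (a n) * g n) (m : ℕ) (c) (h : ∀ k, a (m + k) = c) :
    TailEquiv g (seqPow (Lt c)) := by
  refine ⟨m, 0, ?_⟩
  ext1 k
  rw [shift_iter h0]
  induction k with
  | zero => simp [seqPow]
  | succ k ih =>
    simp only [Function.iterate_zero, id, seqPow] at *
    rw [← add_assoc, hs, h, mul_assoc, ih, pow_succ']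

lemma tail_per {g : ℕ → F2} {a : ℕ → Bool × Bool} (h0 : g 0 = 1)
    (hs : ∀ n, g (n + 1) = Lt (a n) * g n) (m : ℕ) (c d)
    (h : ∀ k, a (m + k) = if k % 2 = 0 then c else d) :
    TailEquiv g (seqPer (Lt c) (Lt d)) := by
  refine ⟨m, 0, ?_⟩
  ext1 k
  rw [shift_iter h0]
  induction k with
  | zero => simp [seqPer]
  | succ k ih =>
    simp only [Function.iterate_zero, id] at *
    rw [← add_assoc, hs, h, mul_assoc, ih, seqPer_succ]
    split_ifs <;> rfl

lemma not_shrink (l : ℝ) {g s : ℕ → F2} (hg : g 0 = 1) (hs : s 0 = 1) (ht : TailEquiv g s)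
    (hb : ∀ y, y ≠ 0 → ∃ c, 0 < c ∧ ∀ j, c ≤ nrm (act l (s j) y)) :
    ¬ ∃ x ∈ Circ, IsShrinkingSeq l g x := by
  rintro ⟨x, hx, hsh⟩
  obtain ⟨m, n, hmn⟩ := ht
  have hx0 := circ_ne hx
  have key : ∀ k, g (m + k) = s (n + k) * ((s n)⁻¹ * g m) := by
    intro k
    have := congrFun hmn k
    rw [shift_iter hg, shift_iter hs] at this
    rw [← mul_assoc, ← this]; group
  obtain ⟨c, hc, hcb⟩ := hb (act l ((s n)⁻¹ * g m) x) (act_ne _ _ _ hx0)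
  have fin : ∀ M : ℕ, ∃ d, 0 < d ∧ ∀ i < M, d ≤ nrm (act l (g i) x) := by
    intro M
    induction M with
    | zero => exact ⟨1, one_pos, by simp⟩
    | succ M ih =>
      obtain ⟨d, hd, h⟩ := ih
      refine ⟨min d (nrm (act l (g M) x)), lt_min hd (nrm_pos (act_ne _ _ _ hx0)), ?_⟩
      intro i hi
      rcases Nat.lt_succ_iff_lt_or_eq.1 hi with h' | rfl
      · exact (min_le_left _ _).trans (h i h')
      · exact min_le_right _ _
  obtain ⟨d, hd, hdb⟩ := fin m
  obtain ⟨i, hi⟩ := hsh (min c d) (lt_min hc hd)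
  rcases lt_or_ge i m with h | h
  · exact absurd (hdb i h) (not_le.2 (hi.trans_le (min_le_right _ _)))
  · obtain ⟨k, rfl⟩ := Nat.exists_eq_add_of_le h
    rw [key, act_mul] at hi
    exact absurd (hcb (n + k)) (not_le.2 (hi.trans_le (min_le_left _ _)))

lemma pow_bound (l : ℝ) (c : Bool × Bool) (y) (hy : y ≠ 0) :
    ∃ d, 0 < d ∧ ∀ j, d ≤ nrm (act l (seqPow (Lt c) j) y) := by
  have hrec : ∀ j, act l (seqPow (Lt c) (j + 1)) y = Am l c (act l (seqPow (Lt c) j) y) := by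
    intro j; rw [← act_Lt, ← act_mul, seqPow, seqPow, pow_succ']
  rcases c with ⟨t, s⟩
  cases t
  · by_cases h : y 0 = 0
    · have : ∀ j, act l (seqPow (Lt (false, s)) j) y = y := by
        intro j
        induction j with
        | zero => simp [seqPow, act_one]
        | succ j ih => 
          rw [hrec, ih]; ext i; fin_cases i <;> simp [Am, h]
      exact ⟨nrm y, nrm_pos hy, fun j => by rw [this]⟩
    · have : ∀ j, act l (seqPow (Lt (false, s)) j) y 0 = y 0 := by
        intro j
        induction j with
        | zero => simp [seqPow, act_one]
        | succ j ih => rw [hrec]; simp [Am, ih]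
      exact ⟨|y 0|, abs_pos.2 h, fun j => by rw [← this j]; exact abs0 _⟩
  · by_cases h : y 1 = 0
    · have : ∀ j, act l (seqPow (Lt (true, s)) j) y = y := by
        intro j
        induction j with
        | zero => simp [seqPow, act_one]
        | succ j ih => 
          rw [hrec, ih]; ext i; fin_cases i <;> simp [Am, h]
      exact ⟨nrm y, nrm_pos hy, fun j => by rw [this]⟩
    · have : ∀ j, act l (seqPow (Lt (true, s)) j) y 1 = y 1 := by
        intro j
        induction j with
        | zero => simp [seqPow, act_one]
        | succ j ih => rw [hrec]; simp [Am, ih]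
      exact ⟨|y 1|, abs_pos.2 h, fun j => by rw [← this j]; exact abs1 _⟩

lemma per_bound (s : Bool) (y) (hy : y ≠ 0) :
    ∃ d, 0 < d ∧ ∀ j, d ≤ nrm (act 2 (seqPer (Lt (true, s)) (Lt (false, !s)) j) y) := by
  have hrec : ∀ j, act 2 (seqPer (Lt (true, s)) (Lt (false, !s)) (j + 1)) y =
      Am 2 (if j % 2 = 0 then (true, s) else (false, !s))
        (act 2 (seqPer (Lt (true, s)) (Lt (false, !s)) j) y) := by
    intro j; rw [← act_Lt, ← act_mul, seqPer_succ]; split_ifs <;> rfl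
  set X := fun j => act 2 (seqPer (Lt (true, s)) (Lt (false, !s)) j) y with hX
  have hX0 : X 0 = y := by simp [hX, seqPer_zero, act_one]
  have rec' : ∀ j, X (j + 1) = Am 2 (if j % 2 = 0 then (true, s) else (false, !s)) (X j) := hrec
  change ∃ d, 0 < d ∧ ∀ j, d ≤ nrm (X j)
  clear hrec
  clear_value X
  by_cases h : y 0 + sg 1 s * y 1 = 0
  · have : ∀ j, NN (X j) = NN y ∧ X j 0 + (if j % 2 = 0 then 1 else -1) * sg 1 s * X j 1 = 0 := by
      intro j
      induction j with
      | zero => simp [hX0, h]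
      | succ j ih =>
        obtain ⟨i1, i2⟩ := ih
        rw [← i1, rec']
        rcases Nat.mod_two_eq_zero_or_one j with e | e <;>
        have e' := Nat.add_mod j 1 2 <;> cases s <;> simp [e] at e' <;>
        simp [e, e', Am, sg, NN] at * <;>
        have i3 := eq_neg_of_add_eq_zero_left i2 <;> constructor <;>
        first | (rw [i3]; ring) | nlinarith
    refine ⟨nrm y, nrm_pos hy, fun j => ?_⟩
    unfold nrm; exact Real.sqrt_le_sqrt (this j).1.ge
  · have : ∀ j, (X j 0 + (if j % 2 = 0 then 1 else -1) * sg 1 s * X j 1) ^ 2 =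
        (y 0 + sg 1 s * y 1) ^ 2 := by
      intro j
      induction j with
      | zero => simp [hX0]
      | succ j ih =>
        rw [← ih, rec']
        rcases Nat.mod_two_eq_zero_or_one j with e | e <;>
        have e' := Nat.add_mod j 1 2 <;> cases s <;> simp [e] at e' <;>
        simp [e, e', Am, sg] <;> ring
    refine ⟨|y 0 + sg 1 s * y 1| / 2, by have := abs_pos.2 h; linarith, fun j => ?_⟩
    have h1 := (sq_eq_sq_iff_abs_eq_abs _ _).1 (this j)
    rw [← h1]
    have h2 := abs_add_le (X j 0) ((if j % 2 = 0 then 1 else -1) * sg 1 s * X j 1)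
    have h3 : |(if j % 2 = 0 then 1 else -1) * sg 1 s * X j 1| = |X j 1| := by
      split_ifs <;> cases s <;> simp [sg]
    have := abs0 (X j)
    have := abs1 (X j)
    linarith

lemma const_tail {a : ℕ → Bool × Bool} (m : ℕ) (h : ∀ k, a (m + k + 1) = a (m + k)) (k : ℕ) :
    a (m + k) = a m := by
  induction k with
  | zero => rfl
  | succ k ih => rw [← add_assoc, h, ih]

lemma cond1_iff (g : ℕ → F2) : Cond1 g ↔ ∀ c, ¬ TailEquiv g (seqPow (Lt c)) := by
  simp only [Cond1, Prod.forall, Bool.forall_bool, Lt]; tauto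

lemma not_fst {a b : Bool × Bool} (h : b ≠ iv a) (h' : b ≠ a) : b.1 ≠ a.1 := by
  rcases a with ⟨_ | _, _ | _⟩ <;> rcases b with ⟨_ | _, _ | _⟩ <;> simp_all [iv]

end S7

open S7 in
theorem stmt7 :
    (∀ l : ℝ, 2 < l → ∀ g : ℕ → F2, IsGeodesicRay g →
      ((∃ x ∈ Circ, IsShrinkingSeq l g x) ↔ Cond1 g)) ∧
    (∀ g : ℕ → F2, IsGeodesicRay g →
      ((∃ x ∈ Circ, IsShrinkingSeq 2 g x) ↔ Cond1 g ∧ Cond2 g)) := by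
  have fwd : ∀ l : ℝ, ∀ g : ℕ → F2, IsGeodesicRay g →
      (∃ x ∈ Circ, IsShrinkingSeq l g x) → Cond1 g := by
    intro l g hg hx
    rw [cond1_iff]
    intro c ht
    exact not_shrink l hg.1 (seqPow_zero _) ht (pow_bound l c) hx
  refine ⟨fun l hl g hg => ⟨fwd l g hg, fun h1 => ?_⟩,
    fun g hg => ⟨fun hx => ⟨fwd 2 g hg hx, ?_, ?_⟩, fun ⟨h1, h2⟩ => ?_⟩⟩
  · rw [cond1_iff] at h1
    obtain ⟨a, hs, hb⟩ := letters hg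
    refine shrinks l hl.le hs hb (1 + l * (l - 2) / 2) (by nlinarith) ?_
    intro x hD m
    have : ∃ k, a (m + k + 1) ≠ a (m + k) := by
      by_contra! hc
      exact h1 _ (tail_pow hg.1 hs m _ (const_tail m hc))
    obtain ⟨k, hk⟩ := this
    refine ⟨m + k, by omega, ?_⟩
    have e1 := switch l hl.le _ _ (not_fst (hb _) hk) _ (hD (m + k + 1))
    rw [← act_back l hs] at e1
    have e2 := mono l hl.le _ _ (hb _) _ (hD (m + k + 2))
    rw [← act_back l hs] at e2
    refine le_trans ?_ e1
    have : 0 ≤ 1 + l * (l - 2) / 2 := by nlinarith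
    exact mul_le_mul_of_nonneg_left e2 this
  · intro ht
    exact not_shrink 2 hg.1 (seqPer_zero _ _) ht (per_bound true) hx
  · intro ht
    exact not_shrink 2 hg.1 (seqPer_zero _ _) ht (per_bound false) hx
  · rw [cond1_iff] at h1
    obtain ⟨a, hs, hb⟩ := letters hg
    refine shrinks 2 le_rfl hs hb 3 (by norm_num) ?_
    intro x hD m
    by_contra! hc
    have c1 : ∀ n, m ≤ n → a (n + 1) = a n ∨ a (n + 1) = (!(a n).1, !(a n).2) := by
      intro n hn
      by_contra! hh
      have hf := not_fst (hb n) hh.1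
      have hf2 : (a (n + 1)).2 = (a n).2 := by
        by_contra h3
        apply hh.2
        ext
        · simpa using Bool.eq_not.2 hf
        · simpa using Bool.eq_not.2 h3
      have e1 := good _ _ hf hf2 _ (hD (n + 1))
      rw [← act_back 2 hs] at e1
      have e2 := mono 2 le_rfl _ _ (hb _) _ (hD (n + 2))
      rw [← act_back 2 hs] at e2
      have := hc n hn
      linarith
    have c2 : ∀ n, m ≤ n → a (n + 1) = a n → a (n + 2) = a (n + 1) := by
      intro n hn h
      by_contra hh
      have hf := not_fst (hb (n + 1)) hh
      have e1 := samesw _ _ hf _ (hD (n + 2))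
      rw [← act_back 2 hs, h, ← act_back 2 hs] at e1
      have := hc n hn
      linarith
    by_cases hsame : ∃ n, m ≤ n ∧ a (n + 1) = a n
    · obtain ⟨n, hn, h⟩ := hsame
      have : ∀ k, a (n + k + 1) = a (n + k) := by
        intro k
        induction k with
        | zero => exact h
        | succ k ih => exact c2 (n + k) (by omega) ih
      exact h1 _ (tail_pow hg.1 hs n _ (const_tail n this))
    · push Not at hsame
      have c3 : ∀ n, m ≤ n → a (n + 1) = (!(a n).1, !(a n).2) := fun n hn =>
        (c1 n hn).resolve_left (hsame n hn)
      have c4 : ∃ n, m ≤ n ∧ (a n).1 = true := by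
        cases h : (a m).1
        · exact ⟨m + 1, by omega, by rw [c3 m le_rfl]; simp [h]⟩
        · exact ⟨m, le_rfl, h⟩
      obtain ⟨n, hn, ht⟩ := c4
      have c5 : ∀ k, a (n + k) = if k % 2 = 0 then (true, (a n).2) else (false, !(a n).2) := by
        intro k
        induction k with
        | zero => simp [← ht]
        | succ k ih =>
          rw [← add_assoc, c3 _ (by omega), ih]
          rcases Nat.mod_two_eq_zero_or_one k with e | e <;>
          have e' := Nat.add_mod k 1 2 <;> simp [e] at e' <;> simp [e, e']
      have := tail_per hg.1 hs n _ _ c5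
      cases h : (a n).2
      · rw [h] at this; exact h2.2 this
      · rw [h] at this; exact h2.1 this
end
end

section
/- Let λ ≥ 2 and let θ = (x, y) ∈ S¹ be λ-renormalizable. Then: if ‖ρ_λ(h⁻¹)θ‖ < 1, then x ≠ 0 and 0 < y/x < (λ − √(λ² − 4))/2; if ‖ρ_λ(v⁻¹)θ‖ < 1, then x ≠ 0 and y/x > (λ + √(λ² − 4))/2; if ‖ρ_λ(h)θ‖ < 1, then x ≠ 0 and (−λ + √(λ² − 4))/2 < y/x < 0; if ‖ρ_λ(v)θ‖ < 1, then x ≠ 0 and y/x < (−λ − √(λ² − 4))/2. -/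
noncomputable section

def st8 (l : ℝ) : Bool × Bool → ℝ × ℝ → ℝ × ℝ
  | (true, true), p => (p.1 + l * p.2, p.2)
  | (true, false), p => (p.1 - l * p.2, p.2)
  | (false, true), p => (p.1, p.2 + l * p.1)
  | (false, false), p => (p.1, p.2 - l * p.1)

def hd8 (p : ℝ × ℝ) : Bool × Bool → Prop
  | (true, true) => p.2 ^ 2 ≤ p.1 * p.2
  | (true, false) => p.2 ^ 2 ≤ -(p.1 * p.2)
  | (false, true) => p.1 ^ 2 ≤ p.1 * p.2
  | (false, false) => p.1 ^ 2 ≤ -(p.1 * p.2)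

lemma act_h (l : ℝ) (x : Fin 2 → ℝ) : act l gh x = ![x 0 + l * x 1, x 1] := by
  ext i; fin_cases i <;> simp [act, rho, gh, hmat, Matrix.mulVec, dotProduct, Fin.sum_univ_two]

lemma act_v (l : ℝ) (x : Fin 2 → ℝ) : act l gv x = ![x 0, x 1 + l * x 0] := by
  ext i; fin_cases i <;> simp [act, rho, gv, vmat, Matrix.mulVec, dotProduct, Fin.sum_univ_two]
  ring

lemma act_mul8 (l : ℝ) (g k : F2) (x : Fin 2 → ℝ) : act l (g * k) x = act l g (act l k x) := by
  unfold act
  rw [Matrix.mulVec_mulVec, map_mul]; rfl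

lemma act_inv8 (l : ℝ) (g : F2) (x z : Fin 2 → ℝ) (h : act l g z = x) : act l g⁻¹ x = z := by
  rw [← h, ← act_mul8]; simp [act]

lemma act_hi (l : ℝ) (x : Fin 2 → ℝ) : act l gh⁻¹ x = ![x 0 - l * x 1, x 1] := by
  apply act_inv8; rw [act_h]; ext i; fin_cases i <;> simp

lemma act_vi (l : ℝ) (x : Fin 2 → ℝ) : act l gv⁻¹ x = ![x 0, x 1 - l * x 0] := by
  apply act_inv8; rw [act_v]; ext i; fin_cases i <;> simp

lemma act_word (l : ℝ) (x : Fin 2 → ℝ) (L : List (Bool × Bool)) :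
    (act l (FreeGroup.mk L) x 0, act l (FreeGroup.mk L) x 1) = L.foldr (st8 l) (x 0, x 1) := by
  induction L with
  | nil =>
    rw [← FreeGroup.one_eq_mk]; simp [act]
  | cons a L ih =>
    have e : (FreeGroup.mk (a :: L) : F2) = FreeGroup.mk [a] * FreeGroup.mk L := by
      rw [FreeGroup.mul_mk]; rfl
    rw [List.foldr_cons, ← ih, e, act_mul8]
    generalize act l (FreeGroup.mk L) x = z
    rcases a with ⟨_ | _, _ | _⟩
    · have : (FreeGroup.mk [(false, false)] : F2) = gv⁻¹ := rfl
      rw [this, act_vi]; simp [st8]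
    · have : (FreeGroup.mk [(false, true)] : F2) = gv := rfl
      rw [this, act_v]; simp [st8]
    · have : (FreeGroup.mk [(true, false)] : F2) = gh⁻¹ := rfl
      rw [this, act_hi]; simp [st8]
    · have : (FreeGroup.mk [(true, true)] : F2) = gh := rfl
      rw [this, act_h]; simp [st8]

def inv8 (l q : ℝ) (L : List (Bool × Bool)) (p : ℝ × ℝ) : Prop :=
  p.1 ^ 2 - l * p.1 * p.2 + p.2 ^ 2 = q ∨ p.1 ^ 2 + l * p.1 * p.2 + p.2 ^ 2 = q ∨
    (-2 * q ≤ l * (p.1 ^ 2 + p.2 ^ 2) ∧ ∃ a, L.head? = some a ∧ hd8 p a)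

lemma lowA (l q x y : ℝ) (hl : 2 ≤ l) (h : x ^ 2 - l * x * y + y ^ 2 = q) :
    -2 * q ≤ l * (x ^ 2 + y ^ 2) := by
  nlinarith [mul_nonneg (by linarith : 0 ≤ l) (sq_nonneg (x - y)), sq_nonneg x, sq_nonneg y]

lemma grow8 (l c x y : ℝ) (hl : 2 ≤ l) (h : c ≤ l * (x ^ 2 + y ^ 2)) (h2 : -y ^ 2 ≤ x * y) :
    c ≤ l * ((x + l * y) ^ 2 + y ^ 2) ∧ y ^ 2 ≤ (x + l * y) * y := by
  constructor
  · have : 0 ≤ l * (l * (2 * (x * y + y ^ 2) + (l - 2) * y ^ 2)) := by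
      have : 0 ≤ l - 2 := by linarith
      have : 0 ≤ x * y + y ^ 2 := by linarith
      positivity
    nlinarith
  · nlinarith [mul_nonneg (by linarith : 0 ≤ l - 2) (sq_nonneg y)]

lemma weak8 (x y : ℝ) (h : x ^ 2 ≤ |x * y|) : |x * y| ≤ y ^ 2 := by
  rw [abs_mul] at *
  rw [← sq_abs] at h
  rw [← sq_abs y]
  rcases (abs_nonneg x).eq_or_lt with h0 | h0
  · rw [← h0]; nlinarith [sq_nonneg |y|]
  · have : |x| ≤ |y| := by nlinarith
    nlinarith [abs_nonneg y]

lemma step_h (l q x y : ℝ) (hl : 2 ≤ l) (hq : q < 0)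
    (h : x ^ 2 - l * x * y + y ^ 2 = q ∨ x ^ 2 + l * x * y + y ^ 2 = q ∨
      (-2 * q ≤ l * (x ^ 2 + y ^ 2) ∧ -y ^ 2 ≤ x * y)) :
    (x + l * y) ^ 2 - l * (x + l * y) * y + y ^ 2 = q ∨
      (-2 * q ≤ l * ((x + l * y) ^ 2 + y ^ 2) ∧ y ^ 2 ≤ (x + l * y) * y) := by
  rcases h with h | h | h
  · right
    refine grow8 l _ x y hl (lowA l q x y hl h) ?_
    have : 0 < l * (x * y) := by nlinarith [sq_nonneg x, sq_nonneg y]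
    have := pos_of_mul_pos_right this (by linarith)
    nlinarith [sq_nonneg y]
  · left; rw [← h]; ring
  · right; exact grow8 l _ x y hl h.1 h.2

lemma inv_word (l q : ℝ) (hl : 2 ≤ l) (hq : q < 0) (p : ℝ × ℝ) (hp : inv8 l q [] p)
    (L : List (Bool × Bool)) (hL : FreeGroup.IsReduced L) :
    inv8 l q L (L.foldr (st8 l) p) := by
  induction L with
  | nil => exact hp
  | cons a L ih =>
    have hL' : FreeGroup.IsReduced L := by
      unfold FreeGroup.IsReduced at *
      exact hL.tail
    have ih := ih hL'
    rw [List.foldr_cons]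
    have hred : ∀ b, L.head? = some b → (a.1 = b.1 → a.2 = b.2) := by
      intro b hb
      cases L with
      | nil => simp at hb
      | cons c L =>
        simp at hb; subst hb
        unfold FreeGroup.IsReduced at hL
        simp at hL
        exact hL.1
    generalize L.foldr (st8 l) p = z at *
    obtain ⟨x, y⟩ := z
    have key : ∀ b, L.head? = some b → hd8 (x, y) b →
        (a = (true, true) → -y ^ 2 ≤ x * y) ∧ (a = (true, false) → -y ^ 2 ≤ -x * y) ∧
        (a = (false, true) → -x ^ 2 ≤ y * x) ∧ (a = (false, false) → -x ^ 2 ≤ -y * x) := by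
      intro b hb hd
      have hr := hred b hb
      have w1 := weak8 x y
      have w2 := weak8 y x
      rw [mul_comm y x] at w2
      have m1 := neg_abs_le (x * y)
      have m2 := le_abs_self (x * y)
      have m3 := neg_le_abs (x * y)
      have m4 := sq_nonneg x
      have m5 := sq_nonneg y
      refine ⟨?_, ?_, ?_, ?_⟩ <;> rintro rfl <;> rcases b with ⟨_ | _, _ | _⟩ <;>
        simp [hd8] at hr hd <;>
        first
        | nlinarith
        | nlinarith [w1 (by linarith)]
        | nlinarith [w2 (by linarith)]
    rcases a with ⟨_ | _, _ | _⟩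
    · have h := step_h l q (-y) x hl hq (by
        rcases ih with h | h | ⟨h, b, hb, hd⟩
        · right; left; rw [← h]; ring
        · left; rw [← h]; ring
        · right; right; exact ⟨by linarith, (key b hb hd).2.2.2 rfl⟩)
      rcases h with h | h
      · right; left; rw [← h]; simp only [st8]; ring
      · right; right
        refine ⟨by simp only [st8]; linarith, _, rfl, ?_⟩
        simp only [st8, hd8]; linarith
    · have h := step_h l q y x hl hq (by
        rcases ih with h | h | ⟨h, b, hb, hd⟩
        · left; rw [← h]; ring
        · right; left; rw [← h]; ring
        · right; right; exact ⟨by linarith, (key b hb hd).2.2.1 rfl⟩)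
      rcases h with h | h
      · left; rw [← h]; simp only [st8]; ring
      · right; right
        refine ⟨by simp only [st8]; linarith, _, rfl, ?_⟩
        simp only [st8, hd8]; linarith
    · have h := step_h l q (-x) y hl hq (by
        rcases ih with h | h | ⟨h, b, hb, hd⟩
        · right; left; rw [← h]; ring
        · left; rw [← h]; ring
        · right; right; exact ⟨by linarith, (key b hb hd).2.1 rfl⟩)
      rcases h with h | h
      · right; left; rw [← h]; simp only [st8]; ring
      · right; right
        refine ⟨by simp only [st8]; linarith, _, rfl, ?_⟩
        simp only [st8, hd8]; linarith
    · have h := step_h l q x y hl hq (by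
        rcases ih with h | h | ⟨h, b, hb, hd⟩
        · left; rw [← h]
        · right; left; rw [← h]
        · right; right; exact ⟨by linarith, (key b hb hd).1 rfl⟩)
      rcases h with h | h
      · left; rw [← h]; simp only [st8]
      · right; right
        refine ⟨by simp only [st8]; linarith, _, rfl, ?_⟩
        simp only [st8, hd8]; linarith

lemma not_shr (l q : ℝ) (hl : 2 ≤ l) (hq : q < 0) (x : Fin 2 → ℝ)
    (hp : inv8 l q [] (x 0, x 1)) : ¬ Shrinkable l x := by
  intro hs
  have hc : 0 < -2 * q / l := div_pos (by linarith) (by linarith)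
  obtain ⟨g, hg⟩ := hs (Real.sqrt (-2 * q / l)) (Real.sqrt_pos.2 hc)
  have h := inv_word l q hl hq _ hp g.toWord FreeGroup.isReduced_toWord
  rw [← act_word, FreeGroup.mk_toWord] at h
  unfold nrm at hg
  have hg := lt_of_not_ge (fun hc => absurd hg (not_lt.2 (Real.sqrt_le_sqrt hc)))
  rw [lt_div_iff₀ (by linarith)] at hg
  generalize act l g x = z at *
  have : -2 * q ≤ l * (z 0 ^ 2 + z 1 ^ 2) := by
    rcases h with h | h | h
    · exact lowA l q _ _ hl h
    · have := lowA l q (z 0) (-z 1) hl (by rw [← h]; ring)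
      linarith
    · exact h.1
  linarith

lemma ren_pos (l : ℝ) (hl : 2 ≤ l) (x : Fin 2 → ℝ) (h0 : x 0 ≠ 0) (hr : Renormalizable l x) :
    0 < x 0 ^ 2 - l * x 0 * x 1 + x 1 ^ 2 ∧ 0 < x 0 ^ 2 + l * x 0 * x 1 + x 1 ^ 2 := by
  constructor
  · by_contra hn
    rcases (not_lt.1 hn).lt_or_eq with h | h
    · exact not_shr l _ hl h x (Or.inl rfl) hr.1
    · apply hr.2 1 (((1 - l ^ 2) * x 0 + l * x 1) / x 0)
      simp only [one_mul, inv_one, mul_one, act_mul8, act_h, act_vi]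
      ext i; fin_cases i
      · simp; field_simp; ring
      · simp; field_simp; linear_combination (-l) * h
  · by_contra hn
    rcases (not_lt.1 hn).lt_or_eq with h | h
    · exact not_shr l _ hl h x (Or.inr (Or.inl rfl)) hr.1
    · apply hr.2 gh⁻¹ ((x 0 + l * x 1) / x 0)
      have e : gh⁻¹ * (gh * gv⁻¹) * gh⁻¹⁻¹ = gv⁻¹ * gh := by group
      rw [e]
      simp only [act_mul8, act_h, act_vi]
      ext i; fin_cases i
      · simp; field_simp
      · simp; field_simp; linear_combination (-l) * h

lemma arith8 (l t : ℝ) (hl : 2 ≤ l) (h : 0 < 1 - l * t + t ^ 2) :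
    (t < 1 → t < (l - Real.sqrt (l ^ 2 - 4)) / 2) ∧
    (l / 2 < t → (l + Real.sqrt (l ^ 2 - 4)) / 2 < t) := by
  have hs : Real.sqrt (l ^ 2 - 4) ^ 2 = l ^ 2 - 4 := Real.sq_sqrt (by nlinarith)
  have hn := Real.sqrt_nonneg (l ^ 2 - 4)
  set s := Real.sqrt (l ^ 2 - 4)
  constructor <;> intro ht <;> by_contra hc <;> push Not at hc
  · nlinarith [mul_nonneg (by linarith : 0 ≤ t - (l - s) / 2) (by linarith : 0 ≤ (l + s) / 2 - t)]
  · nlinarith [mul_nonneg (by linarith : 0 ≤ t - (l - s) / 2) (by linarith : 0 ≤ (l + s) / 2 - t)]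

theorem stmt8 (l : ℝ) (hl : 2 ≤ l) (x : Fin 2 → ℝ) (hx : x ∈ Circ)
    (hren : Renormalizable l x) :
    (nrm (act l gh⁻¹ x) < 1 →
      x 0 ≠ 0 ∧ 0 < x 1 / x 0 ∧ x 1 / x 0 < (l - Real.sqrt (l ^ 2 - 4)) / 2) ∧
    (nrm (act l gv⁻¹ x) < 1 →
      x 0 ≠ 0 ∧ (l + Real.sqrt (l ^ 2 - 4)) / 2 < x 1 / x 0) ∧
    (nrm (act l gh x) < 1 →
      x 0 ≠ 0 ∧ (-l + Real.sqrt (l ^ 2 - 4)) / 2 < x 1 / x 0 ∧ x 1 / x 0 < 0) ∧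
    (nrm (act l gv x) < 1 →
      x 0 ≠ 0 ∧ x 1 / x 0 < (-l - Real.sqrt (l ^ 2 - 4)) / 2) := by
  have hx1 : x 0 ^ 2 + x 1 ^ 2 = 1 := by
    have : Real.sqrt (x 0 ^ 2 + x 1 ^ 2) = 1 := hx
    rwa [Real.sqrt_eq_one] at this
  rw [act_hi, act_vi, act_h, act_v]
  have hlt : ∀ a b : ℝ, nrm ![a, b] < 1 → a ^ 2 + b ^ 2 < 1 := by
    intro a b h
    simp only [nrm] at h
    rw [Real.sqrt_lt' one_pos] at h
    simpa using h
  have hR := fun h0 => ren_pos l hl x h0 hren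
  generalize x 0 = u at *
  generalize x 1 = w at *
  have main : ∀ h0 : u ≠ 0, 0 < 1 - l * (w / u) + (w / u) ^ 2 ∧
      0 < 1 - l * (-(w / u)) + (-(w / u)) ^ 2 := by
    intro h0
    have hu : 0 < u ^ 2 := by positivity
    obtain ⟨a, b⟩ := hR h0
    refine ⟨(div_pos a hu).trans_eq (by field_simp), (div_pos b hu).trans_eq (by field_simp; ring)⟩
  have hw : ∀ h0 : u ≠ 0, ∃ t, w / u = t ∧ w = t * u := fun h0 => ⟨_, rfl, by field_simp⟩
  have hl0 : 0 < l := by linarith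
  refine ⟨fun h => ?_, fun h => ?_, fun h => ?_, fun h => ?_⟩ <;> have h := hlt _ _ h
  · have h' : l * (w * (l * w - 2 * u)) < 0 := by linarith
    have h' := neg_of_mul_neg_right h' hl0.le
    have h0 : u ≠ 0 := by rintro rfl; nlinarith [mul_nonneg hl0.le (sq_nonneg w)]
    obtain ⟨m1, m2⟩ := main h0
    obtain ⟨t, ht, hwt⟩ := hw h0
    rw [ht] at m1 m2 ⊢
    subst hwt
    have hu : 0 < u ^ 2 := by positivity
    have h2 : t * (l * t - 2) < 0 := by
      by_contra hc
      nlinarith [mul_nonneg (not_lt.1 hc) hu.le]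
    have ht0 : 0 < t := by nlinarith
    have h3 := neg_of_mul_neg_right h2 ht0.le
    have : t < 1 := by nlinarith
    exact ⟨h0, ht0, (arith8 l t hl m1).1 this⟩
  · have h' : l * (u * (l * u - 2 * w)) < 0 := by linarith
    have h' := neg_of_mul_neg_right h' hl0.le
    have h0 : u ≠ 0 := by rintro rfl; simp at h'
    obtain ⟨m1, m2⟩ := main h0
    obtain ⟨t, ht, hwt⟩ := hw h0
    rw [ht] at m1 m2 ⊢
    subst hwt
    have hu : 0 < u ^ 2 := by positivity
    have h2 : l / 2 < t := by
      by_contra hc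
      nlinarith [mul_nonneg (sub_nonneg.2 (not_lt.1 hc)) hu.le]
    exact ⟨h0, (arith8 l t hl m1).2 h2⟩
  · have h' : l * (w * (l * w + 2 * u)) < 0 := by linarith
    have h' := neg_of_mul_neg_right h' hl0.le
    have h0 : u ≠ 0 := by rintro rfl; nlinarith [mul_nonneg hl0.le (sq_nonneg w)]
    obtain ⟨m1, m2⟩ := main h0
    obtain ⟨t, ht, hwt⟩ := hw h0
    rw [ht] at m1 m2 ⊢
    subst hwt
    have hu : 0 < u ^ 2 := by positivity
    have h2 : t * (l * t + 2) < 0 := by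
      by_contra hc
      nlinarith [mul_nonneg (not_lt.1 hc) hu.le]
    have ht0 : t < 0 := by nlinarith
    have h3 : 0 < l * t + 2 := by
      by_contra hc
      nlinarith [mul_nonneg (by linarith : 0 ≤ -t) (by linarith : 0 ≤ -(l * t + 2))]
    have : -t < 1 := by nlinarith
    have := (arith8 l (-t) hl m2).1 this
    exact ⟨h0, by linarith, ht0⟩
  · have h' : l * (u * (l * u + 2 * w)) < 0 := by linarith
    have h' := neg_of_mul_neg_right h' hl0.le
    have h0 : u ≠ 0 := by rintro rfl; simp at h'
    obtain ⟨m1, m2⟩ := main h0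
    obtain ⟨t, ht, hwt⟩ := hw h0
    rw [ht] at m1 m2 ⊢
    subst hwt
    have hu : 0 < u ^ 2 := by positivity
    have h2 : l / 2 < -t := by
      by_contra hc
      nlinarith [mul_nonneg (sub_nonneg.2 (not_lt.1 hc)) hu.le]
    have := (arith8 l (-t) hl m2).2 h2
    exact ⟨h0, by linarith⟩
end
end
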